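/- arXiv:2407.06550 — 2 statements merged into one kernel-verified Lean document; each statement's English description precedes it below -/
import Mathlib

section
/- For all 1 ≤ i,j ≤ m: (1) if i+j < m+1, or if i+j = m+1 and q_i = 2, then E_jE_i^* = F_jF_i^* and E_i^*E_j = F_i^*F_j; (2) if i+j > m+1, then F_jF_i^* = 0 and F_i^*F_j = 0. -/
/-!
All four matrices involved are Kronecker products (or rank-one matrices built from them), so the
theorem reduces to identities in a single coordinate. Write `a_i(y) = (A_i)_{0,y}`. Then
`(F_j)_{x,y} = |X|/m_j · (E_j)_{x,0} (E_j)_{0,y}` and `(F*_i)_{x,y} = a_i(x) a_i(y) / k_i`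
(`Fmat_apply`, `FmatStar_apply`), whence
`(F_j F*_i)_{x,z} = |X| / (m_j k_i) · S · (E_j)_{x,0} a_i(z)` with `S = ∑_y (E_j)_{0,y} a_i(y)`
(`Fmat_mul_FmatStar_apply`). The sum `S` factors over the coordinates (`sum_idem_mul_adj`).

Put `t = m - j + 1`. If `i > t`, the factor of `S` at coordinate `i` is `∑_y δ_{0,y}(1 - δ_{0,y}) = 0`,
so `F_j F*_i = 0`. If `i < t`, or `i = t` and `q_i = 2`, then in every coordinate
`q_s · S_s · e_s(x,0) a_s(z) = m_{j,s} k_{i,s} · e_s(x,z) a_s(z)` (`factor_identity`), and taking the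
product gives `F_j F*_i = E_j E*_i`. All four matrices are symmetric, so the identities for the
products in the opposite order follow by transposition.
-/

open Matrix BigOperators

noncomputable section

namespace OHS

variable (m : ℕ) (q : ℕ → ℕ)

/-- The vertex set `X = ∏_{s=1}^m ℤ/q_sℤ` of `𝔛(m,1)`. -/
abbrev Vtx : Type := (i : Fin m) → ZMod (q ((i : ℕ) + 1))

/-- The adjacency matrices `A_j` of `𝔛(m,1)`, given entrywise
(the Kronecker product `J_1⊗⋯⊗J_{j−1}⊗(J_j−I_j)⊗I_{j+1}⊗⋯⊗I_m`, and `A_0` the identity). -/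
def AdjOne (j : ℕ) : Matrix (Vtx m q) (Vtx m q) ℂ :=
  Matrix.of fun x y => ∏ i : Fin m,
    if (i : ℕ) + 1 < j then (1 : ℂ)
    else if (i : ℕ) + 1 = j then (if x i = y i then 0 else 1)
    else if x i = y i then 1 else 0

/-- The primitive idempotents `E_j` of `𝔛(m,1)`, given entrywise
(`E_0 = J̃_1⊗⋯⊗J̃_m`, `E_j = J̃_1⊗⋯⊗J̃_{m−j}⊗(I_{m−j+1}−J̃_{m−j+1})⊗I_{m−j+2}⊗⋯⊗I_m`). -/
def IdemOne (j : ℕ) : Matrix (Vtx m q) (Vtx m q) ℂ :=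
  Matrix.of fun x y => ∏ i : Fin m,
    if (i : ℕ) + 1 < m - j + 1 then ((q ((i : ℕ) + 1) : ℂ))⁻¹
    else if (i : ℕ) + 1 = m - j + 1 then
      (if x i = y i then (1 : ℂ) else 0) - ((q ((i : ℕ) + 1) : ℂ))⁻¹
    else if x i = y i then 1 else 0

/-- The dual primitive idempotents `E*_j` w.r.t. the base point `0`:
the diagonal matrix whose `(y,y)` entry is the `(0,y)` entry of `A_j`. -/
def DualIdemOne (j : ℕ) : Matrix (Vtx m q) (Vtx m q) ℂ :=
  Matrix.diagonal fun y => AdjOne m q j 0 y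

/-- The valency `k_j`: `k_0 = 1` and `k_j = (q_j−1)∏_{s<j} q_s`. -/
def valency (j : ℕ) : ℕ :=
  ∏ i : Fin m,
    if (i : ℕ) + 1 < j then q ((i : ℕ) + 1)
    else if (i : ℕ) + 1 = j then q ((i : ℕ) + 1) - 1
    else 1

/-- The multiplicity `m_j`: `m_0 = 1` and `m_j = (q_{m−j+1}−1)∏_{s=m−j+2}^m q_s`. -/
def multiplicity (j : ℕ) : ℕ :=
  ∏ i : Fin m,
    if m - j + 1 < (i : ℕ) + 1 then q ((i : ℕ) + 1)
    else if (i : ℕ) + 1 = m - j + 1 then q ((i : ℕ) + 1) - 1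
    else 1

section WithFintype

variable [∀ i, NeZero (q i)]

/-- `F_j = (|X|/m_j)·E_j E*_0 E_j`. -/
def Fmat (j : ℕ) : Matrix (Vtx m q) (Vtx m q) ℂ :=
  ((Fintype.card (Vtx m q) : ℂ) / (multiplicity m q j : ℂ)) •
    (IdemOne m q j * DualIdemOne m q 0 * IdemOne m q j)

/-- `F*_j = (|X|/k_j)·E*_j E_0 E*_j`. -/
def FmatStar (j : ℕ) : Matrix (Vtx m q) (Vtx m q) ℂ :=
  ((Fintype.card (Vtx m q) : ℂ) / (valency m q j : ℂ)) •
    (DualIdemOne m q j * IdemOne m q 0 * DualIdemOne m q j)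

/-- `G_j = E_j − F_j`. -/
def Gmat (j : ℕ) : Matrix (Vtx m q) (Vtx m q) ℂ := IdemOne m q j - Fmat m q j

/-- `G*_j = E*_j − F*_j`. -/
def GmatStar (j : ℕ) : Matrix (Vtx m q) (Vtx m q) ℂ :=
  DualIdemOne m q j - FmatStar m q j

/-- The Terwilliger algebra of `𝔛(m,1)` w.r.t. the base point `0`: the unital
ℂ-subalgebra generated by the adjacency matrices and the dual idempotents. -/
def Ter1 : Subalgebra ℂ (Matrix (Vtx m q) (Vtx m q) ℂ) :=
  Algebra.adjoin ℂ
    ({M | ∃ j ≤ m, M = AdjOne m q j} ∪ {M | ∃ j ≤ m, M = DualIdemOne m q j})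

end WithFintype

/-- `Λ(m)`: pairs `(i,j)` with `1 ≤ i,j ≤ m` and either `i+j > m+1`,
or `i+j = m+1` and `q_i ≥ 3`. -/
def LamSet : Finset (ℕ × ℕ) :=
  ((Finset.Icc 1 m) ×ˢ (Finset.Icc 1 m)).filter
    fun p => m + 1 < p.1 + p.2 ∨ (p.1 + p.2 = m + 1 ∧ 3 ≤ q p.1)

variable (n : ℕ)

/-- The largest (1-based) position where `v` is nonzero; `0` if `v = 0`. -/
def level (v : Vtx m q) : ℕ :=
  (Finset.univ.filter fun i : Fin m => v i ≠ 0).sup fun i => (i : ℕ) + 1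

/-- `I(m,n)`: tuples `(λ_0,…,λ_m)` of naturals summing to `n`. -/
def ShapeSet : Finset (Fin (m + 1) → ℕ) :=
  (Fintype.piFinset fun _ : Fin (m + 1) => Finset.range (n + 1)).filter
    fun lam => ∑ j, lam j = n

/-- `x ∈ X^n` has shape `λ`. -/
def hasShape (x : Fin n → Vtx m q) (lam : Fin (m + 1) → ℕ) : Prop :=
  ∀ j : Fin (m + 1),
    (Finset.univ.filter fun i : Fin n => level m q (x i) = (j : ℕ)).card = lam j

instance (x : Fin n → Vtx m q) (lam : Fin (m + 1) → ℕ) :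
    Decidable (hasShape m q n x lam) := by
  unfold hasShape; infer_instance

/-- The `λ`-th adjacency matrix `𝐀_λ` of the ordered Hamming scheme `𝔛(m,n)`. -/
def AdjN (lam : Fin (m + 1) → ℕ) :
    Matrix (Fin n → Vtx m q) (Fin n → Vtx m q) ℂ :=
  Matrix.of fun x y => if hasShape m q n (fun i => x i - y i) lam then 1 else 0

/-- The `λ`-th dual primitive idempotent `𝐄*_λ` of `𝔛(m,n)` (base point `0`). -/
def DualIdemN (lam : Fin (m + 1) → ℕ) :
    Matrix (Fin n → Vtx m q) (Fin n → Vtx m q) ℂ :=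
  Matrix.diagonal fun y => if hasShape m q n y lam then 1 else 0

/-- `L_λ(M_•)`: entrywise, the sum over functions `f` with `#f⁻¹(j) = λ_j` of
`∏_i (M_{f(i)})_{x_i,y_i}`. -/
def Lmat {ι : Type*} [Fintype ι] [DecidableEq ι]
    (M : ι → Matrix (Vtx m q) (Vtx m q) ℂ) (lam : ι → ℕ) :
    Matrix (Fin n → Vtx m q) (Fin n → Vtx m q) ℂ :=
  Matrix.of fun x y =>
    ∑ f ∈ Finset.univ.filter
        (fun f : Fin n → ι =>
          ∀ j, (Finset.univ.filter fun i => f i = j).card = lam j),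
      ∏ i, M (f i) (x i) (y i)

/-- The Kronecker product `M_1⊗⋯⊗M_n`. -/
def kron (M : Fin n → Matrix (Vtx m q) (Vtx m q) ℂ) :
    Matrix (Fin n → Vtx m q) (Fin n → Vtx m q) ℂ :=
  Matrix.of fun x y => ∏ i, M i (x i) (y i)

section WithFintype2

variable [∀ i, NeZero (q i)]

/-- The Terwilliger algebra `𝐓(m,n)` of `𝔛(m,n)` w.r.t. the zero base point. -/
def TerN : Subalgebra ℂ (Matrix (Fin n → Vtx m q) (Fin n → Vtx m q) ℂ) :=
  Algebra.adjoin ℂ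
    ({M | ∃ lam ∈ ShapeSet m n, M = AdjN m q n lam} ∪
      {M | ∃ lam ∈ ShapeSet m n, M = DualIdemN m q n lam})

end WithFintype2

/-- The entry `P_i(j; r)` of the first eigenmatrix for the parameter sequence `r`. -/
def PEnt (r : ℕ → ℕ) (i j : ℕ) : ℂ :=
  if i + j < m + 1 then (valency m r i : ℂ)
  else if i + j = m + 1 then -(valency m r i : ℂ) / ((r i : ℂ) - 1)
  else 0

/-- The multivariate Krawtchouk polynomial `K_μ(λ; r_1,…,r_m)`: the coefficient of
`z^μ` in `∏_{j=0}^m (Σ_{i=0}^m P_i(j;r) z_i)^{λ_j}`. -/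
def Kraw (r : ℕ → ℕ) (mu lam : Fin (m + 1) → ℕ) : ℂ :=
  MvPolynomial.coeff (Finsupp.equivFunOnFinite.symm mu)
    (∏ j : Fin (m + 1),
      (∑ i : Fin (m + 1),
        MvPolynomial.C (PEnt m r (i : ℕ) (j : ℕ)) * MvPolynomial.X i) ^ lam j)

/-- `C(m,n)`: tuples `(τ_1,…,τ_m)` of naturals summing to `n`. -/
def Ctuples : Finset (Fin m → ℕ) :=
  (Fintype.piFinset fun _ : Fin m => Finset.range (n + 1)).filter
    fun t => ∑ i, t i = n

/-- `Θ(λ,μ)`: nonnegative-integer `m×m` matrices supported on `Λ(m)` with row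
sums `λ` and column sums `μ`. -/
def ThetaSet (lam mu : Fin m → ℕ) : Finset (Fin m → Fin m → ℕ) :=
  (Fintype.piFinset fun _ : Fin m =>
      Fintype.piFinset fun _ : Fin m => Finset.range (n + 1)).filter
    fun c =>
      (∀ i j : Fin m, ((i : ℕ) + 1, (j : ℕ) + 1) ∉ LamSet m q → c i j = 0) ∧
      (∀ i, ∑ j, c i j = lam i) ∧ (∀ j, ∑ i, c i j = mu j)

/-- `Ω(m,n)`: the pairs `(λ,μ)` with `Θ(λ,μ) ≠ ∅`. -/
def OmegaSet : Finset ((Fin m → ℕ) × (Fin m → ℕ)) :=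
  ((Ctuples m n) ×ˢ (Ctuples m n)).filter
    fun p => (ThetaSet m q n p.1 p.2).Nonempty

/-- The permutation matrix `P_σ` of the coordinate permutation
`(x_1,…,x_n) ↦ (x_{σ⁻¹(1)},…,x_{σ⁻¹(n)})` of `X^n`. -/
def permMat (σ : Equiv.Perm (Fin n)) :
    Matrix (Fin n → Vtx m q) (Fin n → Vtx m q) ℂ :=
  Matrix.of fun x y => if x = y ∘ ⇑σ⁻¹ then 1 else 0

/-- The tensor factor of `E_j` at the coordinate `s` (1-based), of size `n`,
where `t = m - j + 1` is the position of the factor `I - J̃`. -/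
def idemFactor (t s n : ℕ) (x y : ZMod n) : ℂ :=
  if s < t then (n : ℂ)⁻¹
  else if s = t then (if x = y then (1 : ℂ) else 0) - (n : ℂ)⁻¹
  else if x = y then 1 else 0

/-- The tensor factor at the coordinate `s` (1-based), of size `n`, of the row of `A_i`
indexed by `0`. -/
def adjFactor (i s n : ℕ) (y : ZMod n) : ℂ :=
  if s < i then 1
  else if s = i then (if 0 = y then 0 else 1)
  else if 0 = y then 1 else 0

lemma idemOne_apply (m : ℕ) (q : ℕ → ℕ) (j : ℕ) (x y : Vtx m q) :
    IdemOne m q j x y =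
      ∏ s : Fin m, idemFactor (m - j + 1) (s + 1) (q (s + 1)) (x s) (y s) := rfl

lemma adjOne_zero_apply (m : ℕ) (q : ℕ → ℕ) (i : ℕ) (y : Vtx m q) :
    AdjOne m q i 0 y = ∏ s : Fin m, adjFactor i (s + 1) (q (s + 1)) (y s) := rfl

lemma idemOne_transpose (m : ℕ) (q : ℕ → ℕ) (j : ℕ) :
    (IdemOne m q j)ᵀ = IdemOne m q j := by
  ext x y
  simp only [Matrix.transpose_apply, IdemOne, Matrix.of_apply, eq_comm]

lemma dualIdemOne_transpose (m : ℕ) (q : ℕ → ℕ) (j : ℕ) :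
    (DualIdemOne m q j)ᵀ = DualIdemOne m q j :=
  Matrix.diagonal_transpose _

lemma Fmat_transpose (m : ℕ) (q : ℕ → ℕ) [∀ i, NeZero (q i)] (j : ℕ) :
    (Fmat m q j)ᵀ = Fmat m q j := by
  simp only [Fmat, Matrix.transpose_smul, Matrix.transpose_mul, idemOne_transpose,
    dualIdemOne_transpose, Matrix.mul_assoc]

lemma FmatStar_transpose (m : ℕ) (q : ℕ → ℕ) [∀ i, NeZero (q i)] (j : ℕ) :
    (FmatStar m q j)ᵀ = FmatStar m q j := by
  simp only [FmatStar, Matrix.transpose_smul, Matrix.transpose_mul, idemOne_transpose,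
    dualIdemOne_transpose, Matrix.mul_assoc]

/-- `E*_0` is the matrix unit at the base point. -/
lemma adjOne_zero_zero (m : ℕ) (q : ℕ → ℕ) (y : Vtx m q) :
    AdjOne m q 0 0 y = if y = 0 then 1 else 0 := by
  simp only [AdjOne, Matrix.of_apply, Nat.not_lt_zero, if_false, Nat.succ_ne_zero]
  rw [Fintype.prod_ite_zero]
  simp [funext_iff, eq_comm]

lemma Fmat_apply (m : ℕ) (q : ℕ → ℕ) [∀ i, NeZero (q i)] (j : ℕ) (x y : Vtx m q) :
    Fmat m q j x y = (Fintype.card (Vtx m q) : ℂ) / (multiplicity m q j : ℂ) *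
      (IdemOne m q j x 0 * IdemOne m q j 0 y) := by
  simp only [Fmat, Matrix.smul_apply, smul_eq_mul, DualIdemOne]
  rw [Matrix.mul_apply]
  simp [Matrix.mul_diagonal, adjOne_zero_zero]

lemma card_vtx (m : ℕ) (q : ℕ → ℕ) [∀ i, NeZero (q i)] :
    (Fintype.card (Vtx m q) : ℂ) = ∏ s : Fin m, (q (s + 1) : ℂ) := by
  simp [Fintype.card_pi, ZMod.card]

/-- `E_0` is the all-ones matrix divided by `|X|`. -/
lemma idemOne_zero_apply (m : ℕ) (q : ℕ → ℕ) [∀ i, NeZero (q i)] (x y : Vtx m q) :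
    IdemOne m q 0 x y = (Fintype.card (Vtx m q) : ℂ)⁻¹ := by
  rw [card_vtx, ← Finset.prod_inv_distrib, idemOne_apply]
  refine Finset.prod_congr rfl fun s _ => ?_
  rw [idemFactor, if_pos (by omega)]

lemma FmatStar_apply (m : ℕ) (q : ℕ → ℕ) [∀ i, NeZero (q i)] (i : ℕ) (x y : Vtx m q) :
    FmatStar m q i x y = (valency m q i : ℂ)⁻¹ * (AdjOne m q i 0 x * AdjOne m q i 0 y) := by
  have hX : (Fintype.card (Vtx m q) : ℂ) ≠ 0 := by
    exact_mod_cast Fintype.card_ne_zero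
  simp only [FmatStar, Matrix.smul_apply, smul_eq_mul, DualIdemOne, Matrix.mul_diagonal,
    Matrix.diagonal_mul, idemOne_zero_apply]
  field_simp

lemma Fmat_mul_FmatStar_apply (m : ℕ) (q : ℕ → ℕ) [∀ i, NeZero (q i)] (i j : ℕ)
    (x z : Vtx m q) :
    (Fmat m q j * FmatStar m q i) x z =
      (Fintype.card (Vtx m q) : ℂ) / (multiplicity m q j : ℂ) * (valency m q i : ℂ)⁻¹ *
        (∑ y, IdemOne m q j 0 y * AdjOne m q i 0 y) *
        (IdemOne m q j x 0 * AdjOne m q i 0 z) := by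
  simp only [Matrix.mul_apply, Fmat_apply, FmatStar_apply, Finset.mul_sum, Finset.sum_mul]
  exact Finset.sum_congr rfl fun y _ => by ring

lemma sum_idem_mul_adj (m : ℕ) (q : ℕ → ℕ) [∀ i, NeZero (q i)] (i j : ℕ) :
    ∑ y, IdemOne m q j 0 y * AdjOne m q i 0 y =
      ∏ s : Fin m, ∑ y : ZMod (q (s + 1)),
        idemFactor (m - j + 1) (s + 1) (q (s + 1)) 0 y * adjFactor i (s + 1) (q (s + 1)) y := by
  rw [Finset.prod_univ_sum, Fintype.piFinset_univ]
  refine Finset.sum_congr rfl fun y _ => ?_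
  rw [idemOne_apply, adjOne_zero_apply, ← Finset.prod_mul_distrib]
  rfl

/-- The factor of `S` at the coordinate `i` vanishes when `i > t`: the supports of the two
factors are `{0}` and its complement. -/
lemma factor_sum_eq_zero (t i n : ℕ) [NeZero n] (h : t < i) :
    ∑ y : ZMod n, idemFactor t i n 0 y * adjFactor i i n y = 0 := by
  refine Finset.sum_eq_zero fun y _ => ?_
  by_cases hy : 0 = y <;> simp [idemFactor, adjFactor, h.not_gt, h.ne', hy]

lemma sum_zero_ite (n : ℕ) [NeZero n] (c : ℂ) :
    ∑ y : ZMod n, c * (if 0 = y then (0 : ℂ) else 1) = c * ((n : ℂ) - 1) := by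
  have h : ∀ y : ZMod n, (if 0 = y then (0 : ℂ) else 1) = 1 - if 0 = y then 1 else 0 := by
    intro y; split_ifs <;> simp
  rw [← Finset.mul_sum]
  simp [h, Finset.sum_sub_distrib, ZMod.card]

/-- The values of the factors of `S = ∑_y (E_j)_{0,y} a_i(y)` when `i ≤ t`. -/
lemma factor_sum (t i s n : ℕ) [NeZero n] (h : i ≤ t) :
    ∑ y : ZMod n, idemFactor t s n 0 y * adjFactor i s n y =
      if s < i then 1
      else if s = i then (if s < t then 1 - (n : ℂ)⁻¹ else -(1 - (n : ℂ)⁻¹))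
      else if s < t then (n : ℂ)⁻¹
      else if s = t then 1 - (n : ℂ)⁻¹
      else 1 := by
  have hn : (n : ℂ) ≠ 0 := NeZero.ne _
  rcases lt_trichotomy s i with h1 | rfl | h1
  · simp [idemFactor, adjFactor, h1, h1.trans_le h, ZMod.card, hn]
  · rcases h.lt_or_eq with h2 | rfl
    · simp only [idemFactor, adjFactor, lt_irrefl, if_false, if_true, h2, sum_zero_ite]
      field_simp
    · have : ∀ y : ZMod n, ((if 0 = y then (1 : ℂ) else 0) - (n : ℂ)⁻¹) *
          (if 0 = y then (0 : ℂ) else 1) = -(n : ℂ)⁻¹ * (if 0 = y then (0 : ℂ) else 1) := by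
        intro y; split_ifs <;> simp
      simp only [idemFactor, adjFactor, lt_irrefl, if_false, if_true, this, sum_zero_ite]
      field_simp
  · simp [idemFactor, adjFactor, h1.not_gt, h1.ne']

/-- The coordinatewise form of `E_j E*_i = F_j F*_i`, with the denominators `m_j` and `k_i`
cleared. For `i = t` and `n = 2`, both `S_s` and the passage from `e_s(x,0)` to `e_s(x,z)`
(`z ≠ 0`) produce a sign, and the two signs cancel. -/
lemma factor_identity (t i s n : ℕ) [NeZero n]
    (h : i < t ∨ (i = t ∧ (s = i → n = 2))) (x z : ZMod n) :
    (n : ℂ) * (∑ y : ZMod n, idemFactor t s n 0 y * adjFactor i s n y) *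
        (idemFactor t s n x 0 * adjFactor i s n z) =
      (if t < s then (n : ℂ) else if s = t then (n : ℂ) - 1 else 1) *
        (if s < i then (n : ℂ) else if s = i then (n : ℂ) - 1 else 1) *
        (idemFactor t s n x z * adjFactor i s n z) := by
  have hn : (n : ℂ) ≠ 0 := NeZero.ne _
  rw [factor_sum t i s n (by omega)]
  rcases lt_trichotomy s i with h1 | rfl | h1
  · have h2 : s < t := by omega
    simp [idemFactor, h1, h2, h2.ne, h2.not_gt]
  · rcases h with h | ⟨rfl, h⟩
    · simp only [idemFactor, h, h.ne, h.not_gt, lt_irrefl, if_true, if_false]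
      field_simp
    · obtain rfl := h rfl
      have h2 : ∀ a : ZMod 2, a = 0 ∨ a = 1 := by decide
      have h01 : (0 : ZMod 2) ≠ 1 := by decide
      rcases h2 x with rfl | rfl <;> rcases h2 z with rfl | rfl <;>
        simp [idemFactor, adjFactor, h01, h01.symm] <;> norm_num
  · by_cases hz : z = 0
    · subst hz
      rcases lt_trichotomy s t with h2 | rfl | h2
      · simp [h1.not_gt, h1.ne', h2, h2.ne, h2.not_gt, hn]
      · simp only [h1.not_gt, h1.ne', lt_irrefl, if_true, if_false]
        field_simp
      · simp [h1.not_gt, h1.ne', h2, h2.ne', h2.not_gt]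
    · simp [adjFactor, h1.not_gt, h1.ne', Ne.symm hz]

lemma multiplicity_cast (m : ℕ) (q : ℕ → ℕ) (hq : ∀ i, 2 ≤ q i) (j : ℕ) :
    (multiplicity m q j : ℂ) = ∏ s : Fin m,
      if m - j + 1 < (s : ℕ) + 1 then (q (s + 1) : ℂ)
      else if (s : ℕ) + 1 = m - j + 1 then (q (s + 1) : ℂ) - 1 else 1 := by
  rw [multiplicity, Nat.cast_prod]
  refine Finset.prod_congr rfl fun s _ => ?_
  have := hq (s + 1)
  push_cast [Nat.cast_sub (show 1 ≤ q (s + 1) by omega)]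
  rfl

lemma valency_cast (m : ℕ) (q : ℕ → ℕ) (hq : ∀ i, 2 ≤ q i) (i : ℕ) :
    (valency m q i : ℂ) = ∏ s : Fin m,
      if (s : ℕ) + 1 < i then (q (s + 1) : ℂ)
      else if (s : ℕ) + 1 = i then (q (s + 1) : ℂ) - 1 else 1 := by
  rw [valency, Nat.cast_prod]
  refine Finset.prod_congr rfl fun s _ => ?_
  have := hq (s + 1)
  push_cast [Nat.cast_sub (show 1 ≤ q (s + 1) by omega)]
  rfl

lemma multiplicity_ne_zero (m : ℕ) (q : ℕ → ℕ) (hq : ∀ i, 2 ≤ q i) (j : ℕ) :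
    multiplicity m q j ≠ 0 := by
  refine Finset.prod_ne_zero_iff.2 fun s _ => ?_
  have := hq (s + 1)
  split_ifs <;> omega

lemma valency_ne_zero (m : ℕ) (q : ℕ → ℕ) (hq : ∀ i, 2 ≤ q i) (i : ℕ) :
    valency m q i ≠ 0 := by
  refine Finset.prod_ne_zero_iff.2 fun s _ => ?_
  have := hq (s + 1)
  split_ifs <;> omega

lemma idem_mul_dualIdem (m : ℕ) (q : ℕ → ℕ) [∀ i, NeZero (q i)] (hq : ∀ i, 2 ≤ q i)
    (i j : ℕ) (hj : j ≤ m) (h : i + j < m + 1 ∨ (i + j = m + 1 ∧ q i = 2)) :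
    IdemOne m q j * DualIdemOne m q i = Fmat m q j * FmatStar m q i := by
  ext x z
  have hm : (multiplicity m q j : ℂ) ≠ 0 := by exact_mod_cast multiplicity_ne_zero m q hq j
  have hk : (valency m q i : ℂ) ≠ 0 := by exact_mod_cast valency_ne_zero m q hq i
  have key : (Fintype.card (Vtx m q) : ℂ) * (∑ y, IdemOne m q j 0 y * AdjOne m q i 0 y) *
        (IdemOne m q j x 0 * AdjOne m q i 0 z) =
      (multiplicity m q j : ℂ) * (valency m q i : ℂ) *
        (IdemOne m q j x z * AdjOne m q i 0 z) := by
    rw [sum_idem_mul_adj, card_vtx, multiplicity_cast m q hq, valency_cast m q hq]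
    simp only [idemOne_apply, adjOne_zero_apply, ← Finset.prod_mul_distrib]
    refine Finset.prod_congr rfl fun s _ => ?_
    refine factor_identity (m - j + 1) i (s + 1) (q (s + 1)) ?_ (x s) (z s)
    rcases h with h | ⟨h, h2⟩
    · left; omega
    · exact Or.inr ⟨by omega, fun hs => by rw [hs, h2]⟩
  rw [Fmat_mul_FmatStar_apply, DualIdemOne, Matrix.mul_diagonal]
  field_simp
  linear_combination -key

lemma Fmat_mul_FmatStar_eq_zero (m : ℕ) (q : ℕ → ℕ) [∀ i, NeZero (q i)]
    (i j : ℕ) (hi : 1 ≤ i) (him : i ≤ m) (hjm : j ≤ m) (h : m + 1 < i + j) :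
    Fmat m q j * FmatStar m q i = 0 := by
  ext x z
  obtain ⟨i, rfl⟩ : ∃ k, i = k + 1 := ⟨i - 1, by omega⟩
  have hS : ∑ y, IdemOne m q j 0 y * AdjOne m q (i + 1) 0 y = 0 := by
    rw [sum_idem_mul_adj]
    -- The 1-based coordinate `i + 1` has index `i` in `Fin m`.
    exact Finset.prod_eq_zero (Finset.mem_univ (⟨i, by omega⟩ : Fin m))
      (factor_sum_eq_zero (m - j + 1) (i + 1) (q (i + 1)) (by omega))
  rw [Fmat_mul_FmatStar_apply, hS]
  simp

/-- For `1 ≤ i,j ≤ m`: if `i+j < m+1`, or `i+j = m+1` and `q_i = 2`, then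
`E_jE*_i = F_jF*_i` and `E*_iE_j = F*_iF_j`; if `i+j > m+1` then
`F_jF*_i = 0` and `F*_iF_j = 0`. -/
theorem stmt8 (m : ℕ) (hm : 1 ≤ m) (q : ℕ → ℕ) [∀ i, NeZero (q i)]
    (hq : ∀ i, 2 ≤ q i) :
    ∀ i j : ℕ, 1 ≤ i → i ≤ m → 1 ≤ j → j ≤ m →
      ((i + j < m + 1 ∨ (i + j = m + 1 ∧ q i = 2)) →
        IdemOne m q j * DualIdemOne m q i = Fmat m q j * FmatStar m q i ∧
        DualIdemOne m q i * IdemOne m q j = FmatStar m q i * Fmat m q j) ∧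
      (m + 1 < i + j →
        Fmat m q j * FmatStar m q i = 0 ∧ FmatStar m q i * Fmat m q j = 0) := by
  intro i j hi him hj hjm
  refine ⟨fun h => ?_, fun h => ?_⟩
  · have h1 := idem_mul_dualIdem m q hq i j hjm h
    refine ⟨h1, ?_⟩
    have h2 := congrArg Matrix.transpose h1
    rwa [Matrix.transpose_mul, Matrix.transpose_mul, idemOne_transpose, dualIdemOne_transpose,
      Fmat_transpose, FmatStar_transpose] at h2
  · have h1 := Fmat_mul_FmatStar_eq_zero m q i j hi him hjm h
    refine ⟨h1, ?_⟩
    have h2 := congrArg Matrix.transpose h1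
    rwa [Matrix.transpose_mul, Fmat_transpose, FmatStar_transpose, Matrix.transpose_zero] at h2

end OHS

end
end

section
/- Assume m ≥ 2 or q_1 ≥ 3. Then for all 1 ≤ i,j ≤ m one has G_jG_i^* = G_i^*G_j; moreover G_jG_i^* = 0 if (i,j) ∉ Λ(m), and G_jG_i^* ≠ 0 if (i,j) ∈ Λ(m). -/
/-!
Write `p = m - j + 1`, let `a = ∏_{s<p} 1/q_s`, and let `B_i` be the indicator function of the ball
`{y : y_s = 0 for all s > i}`. Entrywise,
`E_j(x,y) = a (δ(x_p,y_p) - 1/q_p) [x_s = y_s for all s > p]` (`idemOne_eq`), the `i`-th sphere has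
indicator `B_i - B_{i-1}` (`adjOne_eq`), and, since `E_j(0,0) = m_j/|X|`,
`G_j(x,y) = E_j(x,y) - E_j(x,0) E_j(0,y) / E_j(0,0)` (`gmat_apply`).

Everything rests on how `G_j` meets the balls.
* If `i < p` and `B_i(y) ≠ 0`, then `y` agrees with `0` in all coordinates that `E_j` sees, so
  `E_j(x,y) = E_j(x,0)` and `G_j(x,y) = 0`.
* If `i ≥ p`, then `G_j` only links points which agree beyond coordinate `p`, so
  `B_i(x) = B_i(y)` whenever `G_j(x,y) ≠ 0`. Moreover `G_j B_i = 0`, because `B_i` does not depend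
  on the coordinate `p`, in which every row of `E_j` has sum zero.

Hence `G_j B_i = 0` for every `i` (`gmat_sum_ball`), so `G_j F_i^* = 0`, and `G_j G_i^*` has entries
`G_j(x,y) (B_i - B_{i-1})(y)`. The second argument may be replaced by `x` (`gmat_ball_comm`), so
`G_j G_i^*` is symmetric; as both factors are symmetric, they commute. The vanishing of the product
is then read off from the entries: it is clear for `i < p`, for `i > p` the diagonal entry at the
`i`-th unit vector is `a (1 - 1/q_p)`, and for `i = p` the entries on the sphere are
`a (δ(x_p,y_p) - 1/(q_p - 1))`, which all vanish exactly when `q_p = 2`.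
-/


open Matrix BigOperators

noncomputable section

namespace OHS

variable (m : ℕ) (q : ℕ → ℕ)

variable (n : ℕ)

/-! ### Entries of the idempotents -/

/-- The scalar `∏_{s ≤ m-j} 1/q_s`, contributed to the entries of `E_j` by the factors `J̃_s`. -/
def avgScalar (j : ℕ) : ℂ :=
  ∏ i : Fin m, if (i : ℕ) + 1 < m - j + 1 then ((q ((i : ℕ) + 1) : ℂ))⁻¹ else 1

/-- The indicator function of the ball of radius `i` around `0`: the vertices all of whose
(0-based) coordinates from `i` on vanish. -/
def ball (i : ℕ) (y : Vtx m q) : ℂ :=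
  if ∀ s : Fin m, i ≤ (s : ℕ) → y s = 0 then 1 else 0

variable {m q}

lemma idemOne_eq {j : ℕ} (P : Fin m) (hP : (P : ℕ) = m - j) (x y : Vtx m q) :
    IdemOne m q j x y = if ∀ s : Fin m, P < s → x s = y s then
      avgScalar m q j * ((if x P = y P then 1 else 0) - ((q ((P : ℕ) + 1) : ℂ))⁻¹) else 0 := by
  simp only [IdemOne, Matrix.of_apply]
  by_cases h : ∀ s : Fin m, P < s → x s = y s
  · rw [if_pos h]
    have key : ∀ c : ℂ, avgScalar m q j * c
        = ∏ s : Fin m, ((if (s : ℕ) + 1 < m - j + 1 then ((q ((s : ℕ) + 1) : ℂ))⁻¹ else 1) *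
          (if s = P then c else 1)) := by
      intro c
      rw [Finset.prod_mul_distrib, Finset.prod_ite_eq' Finset.univ P (fun _ => c)]
      simp [avgScalar]
    rw [key]
    refine Finset.prod_congr rfl fun s _ => ?_
    rcases lt_trichotomy s P with hs | rfl | hs
    · have h1 : (s : ℕ) < P := hs
      rw [if_pos (by omega), if_pos (by omega), if_neg hs.ne, mul_one]
    · have h2 : ¬ (s : ℕ) + 1 < m - j + 1 := by omega
      have h3 : (s : ℕ) + 1 = m - j + 1 := by omega
      rw [if_neg h2, if_pos h3, if_neg h2, if_pos rfl, one_mul]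
    · have h1 : (P : ℕ) < s := hs
      have h2 : ¬ (s : ℕ) + 1 < m - j + 1 := by omega
      have h3 : ¬ (s : ℕ) + 1 = m - j + 1 := by omega
      rw [if_neg h2, if_neg h3, if_neg h2, if_neg hs.ne', if_pos (h s hs), one_mul]
  · rw [if_neg h]
    push Not at h
    obtain ⟨s, hs, hne⟩ := h
    have h1 : (P : ℕ) < s := hs
    refine Finset.prod_eq_zero (Finset.mem_univ s) ?_
    rw [if_neg (by omega), if_neg (by omega), if_neg hne]

lemma idemOne_symm (j : ℕ) (x y : Vtx m q) : IdemOne m q j x y = IdemOne m q j y x := by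
  simp only [IdemOne, Matrix.of_apply]
  refine Finset.prod_congr rfl fun s _ => ?_
  simp only [eq_comm]

lemma ball_eq_prod (i : ℕ) (y : Vtx m q) :
    ball m q i y = ∏ s : Fin m, if i ≤ (s : ℕ) then (if y s = 0 then (1 : ℂ) else 0) else 1 := by
  unfold ball
  split_ifs with h
  · refine (Finset.prod_eq_one fun s _ => ?_).symm
    split_ifs with h1 h2
    · rfl
    · exact absurd (h s h1) h2
    · rfl
  · push Not at h
    obtain ⟨s, hs, hne⟩ := h
    exact (Finset.prod_eq_zero (Finset.mem_univ s) (by rw [if_pos hs, if_neg hne])).symm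

lemma adjOne_eq {i : ℕ} (I : Fin m) (hI : (I : ℕ) + 1 = i) (y : Vtx m q) :
    AdjOne m q i 0 y = ball m q i y - ball m q (i - 1) y := by
  simp only [AdjOne, Matrix.of_apply, Pi.zero_apply]
  by_cases h : ∀ s : Fin m, i ≤ (s : ℕ) → y s = 0
  · have hb : ball m q i y = 1 := if_pos h
    by_cases h0 : y I = 0
    · have hb' : ball m q (i - 1) y = 1 := if_pos fun s hs => by
        rcases eq_or_ne s I with rfl | hne
        · exact h0
        · exact h s (by have := fun h => hne (Fin.ext h); omega)
      rw [hb, hb', sub_self]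
      refine Finset.prod_eq_zero (Finset.mem_univ I) ?_
      rw [if_neg (by omega), if_pos hI, if_pos h0.symm]
    · have hb' : ball m q (i - 1) y = 0 := if_neg fun h' => h0 (h' I (by omega))
      rw [hb, hb', sub_zero]
      refine Finset.prod_eq_one fun s _ => ?_
      split_ifs with h1 h2 h3 h3
      · rfl
      · have : s = I := Fin.ext (by omega)
        subst this
        exact absurd h3.symm h0
      · rfl
      · rfl
      · exact absurd (h s (by omega)).symm h3
  · have hb : ball m q i y = 0 := if_neg h
    have hb' : ball m q (i - 1) y = 0 := if_neg fun h' => h fun s hs => h' s (by omega)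
    rw [hb, hb', sub_self]
    push Not at h
    obtain ⟨s, hs, hne⟩ := h
    refine Finset.prod_eq_zero (Finset.mem_univ s) ?_
    rw [if_neg (by omega), if_neg (by omega), if_neg (Ne.symm hne)]

lemma adjOne_zero (y : Vtx m q) : AdjOne m q 0 0 y = if y = 0 then 1 else 0 := by
  have h : ball m q 0 y = if y = 0 then 1 else 0 := by
    simp [ball, funext_iff]
  rw [← h, ball_eq_prod]
  simp only [AdjOne, Matrix.of_apply, Pi.zero_apply]
  refine Finset.prod_congr rfl fun s _ => ?_
  simp [eq_comm]

section Entries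

variable [∀ i, NeZero (q i)]

lemma natCast_ne_zero (s : ℕ) : (q s : ℂ) ≠ 0 := Nat.cast_ne_zero.mpr (NeZero.ne _)

lemma avgScalar_ne_zero (j : ℕ) : avgScalar m q j ≠ 0 := by
  refine Finset.prod_ne_zero_iff.mpr fun s _ => ?_
  split_ifs
  · exact inv_ne_zero (natCast_ne_zero _)
  · exact one_ne_zero

/-- The diagonal entries of `E_j` equal `m_j/|X|`. -/
lemma idemOne_zero_mul_card (j : ℕ) :
    IdemOne m q j 0 0 * (Fintype.card (Vtx m q) : ℂ) = (multiplicity m q j : ℂ) := by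
  simp only [IdemOne, Matrix.of_apply, multiplicity, Fintype.card_pi, ZMod.card, Nat.cast_prod,
    ← Finset.prod_mul_distrib]
  refine Finset.prod_congr rfl fun s _ => ?_
  have h0 : (q ((s : ℕ) + 1) : ℂ) ≠ 0 := natCast_ne_zero _
  have h1 : 1 ≤ q ((s : ℕ) + 1) := Nat.one_le_iff_ne_zero.mpr (NeZero.ne _)
  simp only [if_true]
  rcases lt_trichotomy ((s : ℕ) + 1) (m - j + 1) with h | h | h
  · rw [if_pos h, if_neg (by omega), if_neg (by omega), inv_mul_cancel₀ h0, Nat.cast_one]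
  · rw [if_neg (by omega), if_pos h, if_neg (by omega), if_pos h, Nat.cast_sub h1]
    simp [sub_mul, h0]
  · rw [if_neg (by omega), if_neg (by omega), if_pos h]
    simp

lemma idemOne_zero_ne (hq : ∀ i, 2 ≤ q i) {j : ℕ} (P : Fin m) (hP : (P : ℕ) = m - j) :
    IdemOne m q j 0 0 ≠ 0 := by
  rw [idemOne_eq P hP, if_pos fun _ _ => rfl, if_pos rfl]
  refine mul_ne_zero (avgScalar_ne_zero j) (sub_ne_zero.mpr fun h => ?_)
  have h2 := hq ((P : ℕ) + 1)
  have h3 : (q ((P : ℕ) + 1) : ℂ) = 1 := inv_eq_one.mp h.symm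
  have : q ((P : ℕ) + 1) = 1 := by exact_mod_cast h3
  omega

lemma gmat_apply (j : ℕ) (x y : Vtx m q) :
    Gmat m q j x y = IdemOne m q j x y
      - (IdemOne m q j 0 0)⁻¹ * (IdemOne m q j x 0 * IdemOne m q j 0 y) := by
  have hc : (Fintype.card (Vtx m q) : ℂ) ≠ 0 := Nat.cast_ne_zero.mpr Fintype.card_ne_zero
  have h : (IdemOne m q j * DualIdemOne m q 0 * IdemOne m q j) x y
      = IdemOne m q j x 0 * IdemOne m q j 0 y := by
    rw [Matrix.mul_apply]
    simp only [DualIdemOne, Matrix.mul_diagonal, adjOne_zero]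
    rw [Finset.sum_eq_single 0]
    · simp
    · intro b _ hb
      simp [hb]
    · simp
  rw [Gmat, Matrix.sub_apply, Fmat, Matrix.smul_apply, h, ← idemOne_zero_mul_card, smul_eq_mul,
    mul_comm (IdemOne m q j 0 0), div_mul_cancel_left₀ hc]

lemma gmat_symm (j : ℕ) (x y : Vtx m q) : Gmat m q j x y = Gmat m q j y x := by
  rw [gmat_apply, gmat_apply, idemOne_symm j x y, idemOne_symm j x 0, idemOne_symm j 0 y]
  ring

/-! ### Interaction of `G_j` with balls -/

/-- `E_j` does not see the coordinates before `p = m - j + 1`, so a column of `E_j` at a vertex of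
the ball of radius `i < p` is the column at `0`; hence the column of `G_j` vanishes. -/
lemma gmat_mul_ball_of_lt (hq : ∀ i, 2 ≤ q i) {j : ℕ} (P : Fin m) (hP : (P : ℕ) = m - j)
    {i : ℕ} (hi : i ≤ (P : ℕ)) (x y : Vtx m q) : Gmat m q j x y * ball m q i y = 0 := by
  unfold ball
  split_ifs with h
  · have hy : ∀ x, IdemOne m q j x y = IdemOne m q j x 0 := by
      intro x
      have h1 : ∀ s : Fin m, P < s → y s = 0 := fun s hs =>
        h s (hi.trans (Fin.le_def.mp hs.le))
      rw [idemOne_eq P hP, idemOne_eq P hP, h P hi]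
      have : (∀ s : Fin m, P < s → x s = y s) ↔ ∀ s : Fin m, P < s → x s = (0 : Vtx m q) s :=
        forall₂_congr fun s hs => by rw [h1 s hs]; rfl
      simp only [this]
      rfl
    have h0 := idemOne_zero_ne hq P hP
    rw [gmat_apply, hy x, hy 0]
    field_simp
    ring
  · simp

/-- `G_j` only links vertices agreeing beyond the coordinate `p`. -/
lemma gmat_eq_zero {j : ℕ} (P : Fin m) (hP : (P : ℕ) = m - j) {x y : Vtx m q}
    (h : ¬ ∀ s : Fin m, P < s → x s = y s) : Gmat m q j x y = 0 := by
  rw [gmat_apply, idemOne_eq P hP x y, if_neg h, idemOne_eq P hP x 0, idemOne_eq P hP 0 y]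
  by_cases hx : ∀ s : Fin m, P < s → x s = (0 : Vtx m q) s
  · rw [if_neg (c := ∀ s : Fin m, P < s → (0 : Vtx m q) s = y s)]
    · simp
    · exact fun hy => h fun s hs => (hx s hs).trans (hy s hs)
  · rw [if_neg hx]
    simp

lemma gmat_ball_comm (hq : ∀ i, 2 ≤ q i) {j : ℕ} (P : Fin m) (hP : (P : ℕ) = m - j)
    (i : ℕ) (x y : Vtx m q) :
    Gmat m q j x y * ball m q i y = Gmat m q j x y * ball m q i x := by
  rcases le_or_gt i (P : ℕ) with hi | hi
  · rw [gmat_mul_ball_of_lt hq P hP hi, gmat_symm, gmat_mul_ball_of_lt hq P hP hi]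
  · by_cases h : ∀ s : Fin m, P < s → x s = y s
    · have : (∀ s : Fin m, i ≤ (s : ℕ) → x s = 0) ↔ ∀ s : Fin m, i ≤ (s : ℕ) → y s = 0 :=
        forall₂_congr fun s hs => by rw [h s (Fin.lt_def.mpr (by omega))]
      simp only [ball, this]
    · rw [gmat_eq_zero P hP h, zero_mul, zero_mul]

/-- Both `E_j(x,·)` and the ball indicator are products of functions of single coordinates; for a
radius `i ≥ p` the factor at `p` is `δ(x_p,·) - 1/q_p`, which sums to zero. -/
lemma idemOne_sum_ball {j : ℕ} (P : Fin m) (hP : (P : ℕ) = m - j)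
    {i : ℕ} (hi : (P : ℕ) < i) (x : Vtx m q) :
    ∑ z, IdemOne m q j x z * ball m q i z = 0 := by
  simp only [ball_eq_prod, IdemOne, Matrix.of_apply, ← Finset.prod_mul_distrib]
  rw [← Fintype.prod_sum (fun (s : Fin m) (c : ZMod (q ((s : ℕ) + 1))) =>
    (if (s : ℕ) + 1 < m - j + 1 then ((q ((s : ℕ) + 1) : ℂ))⁻¹
      else if (s : ℕ) + 1 = m - j + 1 then
        (if x s = c then (1 : ℂ) else 0) - ((q ((s : ℕ) + 1) : ℂ))⁻¹
      else if x s = c then 1 else 0) *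
    (if i ≤ (s : ℕ) then (if c = 0 then (1 : ℂ) else 0) else 1))]
  refine Finset.prod_eq_zero (Finset.mem_univ P) ?_
  simp only [if_neg (show ¬ (P : ℕ) + 1 < m - j + 1 by omega),
    if_pos (show (P : ℕ) + 1 = m - j + 1 by omega), if_neg (show ¬ i ≤ (P : ℕ) by omega), mul_one]
  rw [Finset.sum_sub_distrib]
  simp [ZMod.card]

lemma gmat_sum_ball (hq : ∀ i, 2 ≤ q i) {j : ℕ} (P : Fin m) (hP : (P : ℕ) = m - j)
    (i : ℕ) (x : Vtx m q) : ∑ z, Gmat m q j x z * ball m q i z = 0 := by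
  rcases le_or_gt i (P : ℕ) with hi | hi
  · exact Finset.sum_eq_zero fun z _ => gmat_mul_ball_of_lt hq P hP hi x z
  · have h : ∀ z, Gmat m q j x z * ball m q i z = IdemOne m q j x z * ball m q i z
        - (IdemOne m q j 0 0)⁻¹ * IdemOne m q j x 0 * (IdemOne m q j 0 z * ball m q i z) := by
      intro z
      rw [gmat_apply]
      ring
    simp only [h]
    rw [Finset.sum_sub_distrib, ← Finset.mul_sum, idemOne_sum_ball P hP hi,
      idemOne_sum_ball P hP hi]
    simp

/-! ### The product `G_j G_i^*` -/

/-- Since `G_j` annihilates the indicator function of every sphere, `G_j F_i^* = 0`, that is,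
`G_j G_i^* = G_j E_i^*`. -/
lemma gmat_mul_gmatStar (hq : ∀ i, 2 ≤ q i) {i j : ℕ} (P I : Fin m) (hP : (P : ℕ) = m - j)
    (hI : (I : ℕ) + 1 = i) (x y : Vtx m q) :
    (Gmat m q j * GmatStar m q i) x y
      = Gmat m q j x y * (ball m q i y - ball m q (i - 1) y) := by
  have hF : Gmat m q j * DualIdemOne m q i * IdemOne m q 0 = 0 := by
    ext u v
    rw [Matrix.mul_apply]
    simp only [DualIdemOne, Matrix.mul_diagonal, adjOne_eq I hI]
    -- `E_0` is a constant matrix.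
    have hc : ∀ z : Vtx m q, IdemOne m q 0 z v = IdemOne m q 0 0 0 := by
      intro z
      simp only [IdemOne, Matrix.of_apply]
      refine Finset.prod_congr rfl fun s _ => ?_
      have := s.2
      rw [if_pos (by omega), if_pos (by omega)]
    simp only [hc, mul_sub]
    rw [← Finset.sum_mul, Finset.sum_sub_distrib, gmat_sum_ball hq P hP, gmat_sum_ball hq P hP]
    simp
  rw [GmatStar, FmatStar, mul_sub, Matrix.mul_smul, ← mul_assoc, ← mul_assoc, hF, zero_mul,
    smul_zero, sub_zero, DualIdemOne, Matrix.mul_diagonal, adjOne_eq I hI]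

lemma gmat_transpose (j : ℕ) : (Gmat m q j)ᵀ = Gmat m q j := by
  ext x y
  exact gmat_symm j y x

lemma gmatStar_transpose (i : ℕ) : (GmatStar m q i)ᵀ = GmatStar m q i := by
  have h : (IdemOne m q 0)ᵀ = IdemOne m q 0 := by
    ext x y
    exact idemOne_symm 0 y x
  simp only [GmatStar, FmatStar, DualIdemOne, Matrix.transpose_sub, Matrix.transpose_smul,
    Matrix.transpose_mul, Matrix.diagonal_transpose, h, mul_assoc]

/-- For two vertices on the `p`-th sphere with the same coordinate at `p`, the entry of `G_j` is
`a (1 - 1/(q_p - 1))`. It vanishes exactly when `q_p = 2`, in which case any two vertices of the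
sphere have the same coordinate at `p`. -/
lemma gmat_apply_sphere {j : ℕ} (hq : ∀ i, 2 ≤ q i) (P : Fin m) (hP : (P : ℕ) = m - j)
    {x y : Vtx m q} (hx : ∀ s, P < s → x s = 0) (hy : ∀ s, P < s → y s = 0)
    (hxP : x P ≠ 0) (hxy : x P = y P) :
    Gmat m q j x y
      = avgScalar m q j * ((q ((P : ℕ) + 1) : ℂ) - 2) / ((q ((P : ℕ) + 1) : ℂ) - 1) := by
  have ha := avgScalar_ne_zero (m := m) (q := q) j
  have h0 : (q ((P : ℕ) + 1) : ℂ) ≠ 0 := natCast_ne_zero _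
  have h1 : (q ((P : ℕ) + 1) : ℂ) - 1 ≠ 0 := fun h => by
    have h2 := hq ((P : ℕ) + 1)
    have h3 : q ((P : ℕ) + 1) = 1 := by exact_mod_cast sub_eq_zero.mp h
    omega
  have hE0 : ∀ v : Vtx m q, (∀ s, P < s → v s = 0) → v P ≠ 0 →
      IdemOne m q j v 0 = avgScalar m q j * (0 - (q ((P : ℕ) + 1) : ℂ)⁻¹) := by
    intro v hv hvP
    have h2 : ∀ s, P < s → v s = (0 : Vtx m q) s := hv
    have h3 : ¬ v P = (0 : Vtx m q) P := hvP
    rw [idemOne_eq P hP, if_pos h2, if_neg h3]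
  rw [gmat_apply, hE0 x hx hxP, idemOne_symm j 0 y, hE0 y hy (hxy ▸ hxP), idemOne_eq P hP x y,
    if_pos fun s hs => (hx s hs).trans (hy s hs).symm, if_pos hxy, idemOne_eq P hP 0 0,
    if_pos fun _ _ => rfl, if_pos rfl]
  have h2 : (1 : ℂ) - (q ((P : ℕ) + 1) : ℂ)⁻¹ ≠ 0 := by
    rw [show (1 : ℂ) - (q ((P : ℕ) + 1) : ℂ)⁻¹
      = ((q ((P : ℕ) + 1) : ℂ) - 1) * (q ((P : ℕ) + 1) : ℂ)⁻¹ by field_simp]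
    exact mul_ne_zero h1 (inv_ne_zero h0)
  field_simp
  ring

end Entries

/-- Assume `m ≥ 2` or `q_1 ≥ 3`. For `1 ≤ i,j ≤ m`, `G_jG*_i = G*_iG_j`;
this product is zero iff `(i,j) ∉ Λ(m)`. -/
theorem stmt9 (m : ℕ) (hm : 1 ≤ m) (q : ℕ → ℕ) [∀ i, NeZero (q i)]
    (hq : ∀ i, 2 ≤ q i) (hmq : 2 ≤ m ∨ 3 ≤ q 1) :
    ∀ i j : ℕ, 1 ≤ i → i ≤ m → 1 ≤ j → j ≤ m →
      Gmat m q j * GmatStar m q i = GmatStar m q i * Gmat m q j ∧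
      ((i, j) ∉ LamSet m q → Gmat m q j * GmatStar m q i = 0) ∧
      ((i, j) ∈ LamSet m q → Gmat m q j * GmatStar m q i ≠ 0) := by
  intro i j hi him hj hjm
  obtain ⟨P, hP⟩ : ∃ P : Fin m, (P : ℕ) = m - j := ⟨⟨m - j, by omega⟩, rfl⟩
  obtain ⟨I, hI⟩ : ∃ I : Fin m, (I : ℕ) + 1 = i := ⟨⟨i - 1, by omega⟩, by simp; omega⟩
  have hG := gmat_mul_gmatStar hq P I hP hI
  have hG' : ∀ x y, (Gmat m q j * GmatStar m q i) x y
      = Gmat m q j x y * (ball m q i x - ball m q (i - 1) x) := fun x y => by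
    rw [hG, mul_sub, mul_sub, gmat_ball_comm hq P hP, gmat_ball_comm hq P hP]
  refine ⟨?_, fun hL => ?_, fun hL h0 => ?_⟩
  · have hT : (Gmat m q j * GmatStar m q i)ᵀ = Gmat m q j * GmatStar m q i := by
      ext x y
      rw [Matrix.transpose_apply, hG, hG', gmat_symm]
    rw [← hT, Matrix.transpose_mul, gmat_transpose, gmatStar_transpose]
  · simp only [LamSet, Finset.mem_filter, Finset.mem_product, Finset.mem_Icc] at hL
    ext x y
    rw [Matrix.zero_apply]
    rcases le_or_gt i (P : ℕ) with hiP | hiP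
    · rw [hG, mul_sub, gmat_mul_ball_of_lt hq P hP hiP,
        gmat_mul_ball_of_lt hq P hP (by omega), sub_zero]
    · have hIP : I = P := Fin.ext (by omega)
      subst hIP
      have hqi : q ((I : ℕ) + 1) = 2 := by
        have := hq i
        rw [hI]
        omega
      by_contra hne
      -- A nonzero value of the sphere indicator places the vertex on the sphere.
      have hs : ∀ v : Vtx m q, ball m q i v - ball m q (i - 1) v ≠ 0 →
          (∀ s, I < s → v s = 0) ∧ v I ≠ 0 := by
        intro v hv
        rw [← adjOne_eq I hI, AdjOne, Matrix.of_apply, Finset.prod_ne_zero_iff] at hv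
        refine ⟨fun s hs => ?_, fun h => ?_⟩
        · have h1 := hv s (Finset.mem_univ s)
          have h2 : (I : ℕ) < s := hs
          rw [if_neg (by omega), if_neg (by omega)] at h1
          by_contra h3
          exact h1 (if_neg (Ne.symm h3))
        · have h1 := hv I (Finset.mem_univ I)
          rw [if_neg (by omega), if_pos hI, if_pos (by rw [h]; rfl)] at h1
          exact h1 rfl
      obtain ⟨hy, hy0⟩ := hs y (right_ne_zero_of_mul (hG x y ▸ hne))
      obtain ⟨hx, hx0⟩ := hs x (right_ne_zero_of_mul (hG' x y ▸ hne))
      have hxy : x I = y I := by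
        have key : ∀ n : ℕ, n = 2 → ∀ a b : ZMod n, a ≠ 0 → b ≠ 0 → a = b := by
          rintro n rfl
          decide
        exact key _ hqi _ _ hx0 hy0
      rw [hG, gmat_apply_sphere hq I hP hx hy hx0 hxy, hqi] at hne
      simp at hne
  · simp only [LamSet, Finset.mem_filter, Finset.mem_product, Finset.mem_Icc] at hL
    have hnt : ∀ s, Fact (1 < q s) := fun s => ⟨hq s⟩
    -- The diagonal entry at the `i`-th unit vector is nonzero.
    let e : Vtx m q := Pi.single I 1
    have heI : e I = 1 := Pi.single_eq_same I 1
    have heS : ∀ s, s ≠ I → e s = 0 := fun s hs => Pi.single_eq_of_ne hs 1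
    have heI0 : e I ≠ 0 := by
      rw [heI]
      exact one_ne_zero
    have hb : ball m q i e = 1 := if_pos fun s hs => heS s fun h => by subst h; omega
    have hb' : ball m q (i - 1) e = 0 := if_neg fun h => heI0 (h I (by omega))
    have hee := hG e e
    rw [h0, hb, hb', sub_zero, mul_one, Matrix.zero_apply] at hee
    rcases eq_or_ne I P with hIP | hIP
    · subst hIP
      have h3 : 3 ≤ q ((I : ℕ) + 1) := by
        rw [hI]
        omega
      have hz : ∀ s, I < s → e s = 0 := fun s hs => heS s hs.ne'
      rw [gmat_apply_sphere hq I hP hz hz heI0 rfl] at hee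
      have h1 : (q ((I : ℕ) + 1) : ℂ) - 2 ≠ 0 := fun h => by
        have : q ((I : ℕ) + 1) = 2 := by exact_mod_cast sub_eq_zero.mp h
        omega
      have h2 : (q ((I : ℕ) + 1) : ℂ) - 1 ≠ 0 := fun h => by
        have : q ((I : ℕ) + 1) = 1 := by exact_mod_cast sub_eq_zero.mp h
        omega
      exact div_ne_zero (mul_ne_zero (avgScalar_ne_zero j) h1) h2 hee.symm
    · have hlt : P < I := by
        have h1 : (I : ℕ) ≠ P := fun h => hIP (Fin.ext h)
        exact Fin.lt_def.mpr (by omega)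
      have hE0 : IdemOne m q j e 0 = 0 := by
        rw [idemOne_eq P hP, if_neg fun h => heI0 (h I hlt)]
      have hE : IdemOne m q j e e = IdemOne m q j 0 0 := by
        rw [idemOne_eq P hP, idemOne_eq P hP]
        simp
      rw [gmat_apply, hE0, hE, zero_mul, mul_zero, sub_zero] at hee
      exact idemOne_zero_ne hq P hP hee.symm

end OHS

end
end
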